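/- arXiv:2206.04412 — 2 statements merged into one kernel-verified Lean document; each statement's English description precedes it below -/
import Mathlib

section
/- Let {x^k}, {y^k}, {z^k} be generated by the multiobjective MFISTA algorithm, and define σ_k(z) := min_{i=1,…,m} ( F_i(x^k) − F_i(z) ). Then for all z ∈ ℝ^n and all k ≥ 0: σ_k(z) − σ_{k+1}(z) ≥ (ℓ/2)( 2⟨z^{k+1} − y^{k+1}, y^{k+1} − x^k⟩ + ‖z^{k+1} − y^{k+1}‖² ) + ((ℓ − L)/2)‖z^{k+1} − y^{k+1}‖². -/
open scoped RealInnerProductSpace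

noncomputable abbrev E (n : ℕ) := EuclideanSpace ℝ (Fin n)

/-!
The proximal model `max_i (⟪∇ f_i(y), · - y⟫ + g_i + f_i(y) - F_i(x)) + (ℓ / 2) ‖· - y‖²` is a
convex function plus a quadratic, so first-order optimality of `z` bounds the value of the convex
part at `z` by its value at `x` plus `ℓ ⟪z - y, x - z⟫`. Its value at `x` is nonpositive because
convex functions lie above their tangents. By the descent lemma the convex part at `z` in turn
dominates every `F_i(z) - F_i(x)` up to `(L / 2) ‖z - y‖²`, so every objective decreases by at least
the claimed amount. If `z` is rejected, every objective has increased, so this amount is negative,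
whereas the iterate stays put.
-/

open Set AffineMap

theorem convexOn_ciSup {V ι : Type*} [AddCommMonoid V] [SMul ℝ V] [Nonempty ι]
    {s : Set V} {φ : ι → V → ℝ}
    (hφ : ∀ i, ConvexOn ℝ s (φ i)) (hbdd : ∀ u ∈ s, BddAbove (range fun i ↦ φ i u)) :
    ConvexOn ℝ s (fun u ↦ ⨆ i, φ i u) := by
  refine ⟨(hφ (Classical.arbitrary ι)).1, fun u hu v hv a b ha hb hab ↦ ciSup_le fun i ↦ ?_⟩
  refine ((hφ i).2 hu hv ha hb hab).trans ?_
  gcongr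
  · exact le_ciSup (hbdd u hu) i
  · exact le_ciSup (hbdd v hv) i

section NormedSpace

variable {V W : Type*} [NormedAddCommGroup V] [NormedSpace ℝ V]
  [NormedAddCommGroup W] [NormedSpace ℝ W]

/- Minimality of `h + q` over `s` at `p` says that the differentiable function `(u, r) ↦ r + q u` is
minimal at `(p, h p)` over the epigraph of `h`, and the epigraph is convex. -/
theorem le_add_fderiv_of_isMinOn_add {s : Set V} {h q : V → ℝ} {q' : V →L[ℝ] ℝ} {p a : V}
    (hh : ConvexOn ℝ s h) (hq : HasFDerivWithinAt q q' s p)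
    (hmin : IsMinOn (fun u ↦ h u + q u) s p) (hp : p ∈ s) (ha : a ∈ s) :
    h p ≤ h a + q' (a - p) := by
  let epigraph : Set (V × ℝ) := {v | v.1 ∈ s ∧ h v.1 ≤ v.2}
  have hepi : IsMinOn (fun v : V × ℝ ↦ v.2 + q v.1) epigraph (p, h p) := fun v hv ↦
    (hmin hv.1).trans (add_le_add hv.2 le_rfl)
  have hderiv : HasFDerivWithinAt (fun v : V × ℝ ↦ v.2 + q v.1)
      (.snd ℝ V ℝ + q'.comp (.fst ℝ V ℝ)) epigraph (p, h p) :=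
    hasFDerivWithinAt_snd.add (hq.comp (p, h p) hasFDerivWithinAt_fst fun _ hv ↦ hv.1)
  have hcone : (a, h a) - (p, h p) ∈ posTangentConeAt epigraph (p, h p) :=
    sub_mem_posTangentConeAt_of_segment_subset <|
      hh.convex_epigraph.segment_subset ⟨hp, le_rfl⟩ ⟨ha, le_rfl⟩
  have hnonneg : 0 ≤ h a - h p + q' (a - p) :=
    hepi.localize.hasFDerivWithinAt_nonneg hderiv hcone
  linarith

theorem add_fderiv_le_of_convexOn {s : Set V} {f : V → ℝ} {f' : V →L[ℝ] ℝ} {p a : V}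
    (hf : ConvexOn ℝ s f) (hf' : HasFDerivWithinAt f f' s p) (hp : p ∈ s) (ha : a ∈ s) :
    f p + f' (a - p) ≤ f a := by
  -- `f + (-f) = 0` is minimal at every point.
  have hmin : IsMinOn (fun u ↦ f u + (-f) u) s p := fun u _ ↦ by simp
  have hle := le_add_fderiv_of_isMinOn_add hf hf'.neg hmin hp ha
  rw [neg_apply] at hle
  linarith

theorem norm_sub_sub_fderiv_le_of_lipschitz {f : V → W} {f' : V → V →L[ℝ] W} {L : ℝ} {a b : V}
    (hf : ∀ u ∈ segment ℝ b a, HasFDerivAt f (f' u) u)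
    (hL : ∀ u ∈ segment ℝ b a, ‖f' u - f' b‖ ≤ L * ‖u - b‖) :
    ‖f a - f b - f' b (a - b)‖ ≤ L / 2 * ‖a - b‖ ^ 2 := by
  have hline {s : ℝ} (hs : s ∈ Icc (0 : ℝ) 1) : lineMap b a s ∈ segment ℝ b a := by
    rw [segment_eq_image_lineMap]; exact mem_image_of_mem _ hs
  have hderiv (s : ℝ) (hs : s ∈ Icc (0 : ℝ) 1) :
      HasDerivAt (fun s ↦ f (lineMap b a s) - f b - s • f' b (a - b))
        ((f' (lineMap b a s) - f' b) (a - b)) s := by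
    simpa using (((hf _ (hline hs)).comp_hasDerivAt s hasDerivAt_lineMap).sub_const (f b)).fun_sub
      ((hasDerivAt_id s).smul_const (f' b (a - b)))
  have hbound (s : ℝ) (hs : s ∈ Icc (0 : ℝ) 1) :
      ‖(f' (lineMap b a s) - f' b) (a - b)‖ ≤ L / 2 * ‖a - b‖ ^ 2 * (2 * s) :=
    calc ‖(f' (lineMap b a s) - f' b) (a - b)‖
        ≤ ‖f' (lineMap b a s) - f' b‖ * ‖a - b‖ := ContinuousLinearMap.le_opNorm _ _
      _ ≤ L * ‖lineMap b a s - b‖ * ‖a - b‖ := by gcongr; exact hL _ (hline hs)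
      _ = L / 2 * ‖a - b‖ ^ 2 * (2 * s) := by
        rw [← vsub_eq_sub (lineMap b a s), lineMap_vsub_left, vsub_eq_sub, norm_smul,
          Real.norm_of_nonneg hs.1]
        ring
  have hquad (s : ℝ) :
      HasDerivAt (fun s ↦ L / 2 * ‖a - b‖ ^ 2 * s ^ 2) (L / 2 * ‖a - b‖ ^ 2 * (2 * s)) s := by
    simpa using (hasDerivAt_pow 2 s).const_mul (L / 2 * ‖a - b‖ ^ 2)
  simpa using image_norm_le_of_norm_deriv_right_le_deriv_boundary
    (fun s hs ↦ (hderiv s hs).continuousAt.continuousWithinAt)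
    (fun s hs ↦ (hderiv s (Ico_subset_Icc_self hs)).hasDerivWithinAt) (by simp) hquad
    (fun s hs ↦ hbound s (Ico_subset_Icc_self hs)) (right_mem_Icc.2 zero_le_one)

end NormedSpace

section InnerProductSpace

variable {H : Type*} [NormedAddCommGroup H] [InnerProductSpace ℝ H]

theorem le_add_inner_of_isMinOn_add_sq_norm {s : Set H} {h : H → ℝ} {ℓ : ℝ} {x y z : H}
    (hh : ConvexOn ℝ s h) (hmin : IsMinOn (fun u ↦ h u + ℓ / 2 * ‖u - y‖ ^ 2) s z)
    (hz : z ∈ s) (hx : x ∈ s) : h z ≤ h x + ℓ * ⟪z - y, x - z⟫ := by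
  have hq : HasFDerivAt (fun u ↦ ℓ / 2 * ‖u - y‖ ^ 2) (ℓ • innerSL ℝ (z - y)) z := by
    refine (((hasFDerivAt_id z).sub_const y).norm_sq.const_mul (ℓ / 2)).congr_fderiv ?_
    rw [ContinuousLinearMap.comp_id, id_eq]
    module
  exact le_add_fderiv_of_isMinOn_add hh hq.hasFDerivWithinAt hmin hz hx

variable [CompleteSpace H]

theorem le_add_inner_gradient_of_lipschitz {f : H → ℝ} {L : ℝ} (hf : Differentiable ℝ f)
    {b : H} (hL : ∀ u, ‖gradient f u - gradient f b‖ ≤ L * ‖u - b‖) (a : H) :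
    f a ≤ f b + ⟪gradient f b, a - b⟫ + L / 2 * ‖a - b‖ ^ 2 := by
  have hL' (u : H) : ‖fderiv ℝ f u - fderiv ℝ f b‖ ≤ L * ‖u - b‖ := by
    rw [← toDual_gradient, ← toDual_gradient, ← map_sub, LinearIsometryEquiv.norm_map]
    exact hL u
  have htaylor := norm_sub_sub_fderiv_le_of_lipschitz (a := a)
    (fun u _ ↦ (hf u).hasFDerivAt) (fun u _ ↦ hL' u)
  rw [inner_gradient_left]
  linarith [(le_abs_self _).trans htaylor]

/-- The `i`-th component of the max in the model `φ_{x,y,ℓ}`, for `f = f_i` and `g = g_i`: the gap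
`F(u) - F(x)`, where `F = f + g`, with `f(u)` replaced by its linearization at `y`. -/
noncomputable def linearizedGap (f g : H → ℝ) (x y u : H) : ℝ :=
  ⟪gradient f y, u - y⟫ + g u + f y - (f x + g x)

theorem convexOn_linearizedGap (f : H → ℝ) {g : H → ℝ} {s : Set H} (hg : ConvexOn ℝ s g)
    (x y : H) : ConvexOn ℝ s (linearizedGap f g x y) := by
  have hinner := (innerSL ℝ (gradient f y)).toLinearMap.convexOn hg.1
  refine ((hinner.add hg).add_const (f y - (f x + g x) - ⟪gradient f y, y⟫)).congr fun u _ ↦ ?_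
  simp only [Pi.add_apply, ContinuousLinearMap.coe_coe, innerSL_apply_apply, linearizedGap,
    inner_sub_right]
  ring

theorem linearizedGap_self_nonpos {f : H → ℝ} (hf : ConvexOn ℝ univ f) {y : H}
    (hf' : DifferentiableAt ℝ f y) (g : H → ℝ) (x : H) : linearizedGap f g x y x ≤ 0 := by
  have htangent := add_fderiv_le_of_convexOn hf hf'.hasFDerivAt.hasFDerivWithinAt (mem_univ y)
    (mem_univ x)
  rw [linearizedGap, inner_gradient_left]
  linarith

theorem sub_le_linearizedGap_add {f : H → ℝ} {L : ℝ} (hf : Differentiable ℝ f) {y : H}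
    (hL : ∀ u, ‖gradient f u - gradient f y‖ ≤ L * ‖u - y‖) (g : H → ℝ) (x u : H) :
    (f u + g u) - (f x + g x) ≤ linearizedGap f g x y u + L / 2 * ‖u - y‖ ^ 2 := by
  rw [linearizedGap]
  linarith [le_add_inner_gradient_of_lipschitz hf hL u]

variable {ι : Type*}

/-- The function `φ_{x,y,ℓ}` whose minimizer is the multiobjective proximal gradient point. -/
noncomputable def proxModel (f g : ι → H → ℝ) (ℓ : ℝ) (x y u : H) : ℝ :=
  (⨆ i, linearizedGap (f i) (g i) x y u) + ℓ / 2 * ‖u - y‖ ^ 2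

variable [Finite ι] {f g : ι → H → ℝ} {L ℓ : ℝ} {x y z : H}

theorem iSup_linearizedGap_le_of_isMinOn_proxModel [Nonempty ι]
    (hfc : ∀ i, ConvexOn ℝ univ (f i)) (hfd : ∀ i, DifferentiableAt ℝ (f i) y)
    (hgc : ∀ i, ConvexOn ℝ univ (g i)) (hz : IsMinOn (proxModel f g ℓ x y) univ z) :
    ⨆ i, linearizedGap (f i) (g i) x y z ≤ ℓ * ⟪z - y, x - z⟫ := by
  have hconv : ConvexOn ℝ univ fun u ↦ ⨆ i, linearizedGap (f i) (g i) x y u :=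
    convexOn_ciSup (fun i ↦ convexOn_linearizedGap (f i) (hgc i) x y)
      fun _ _ ↦ (finite_range _).bddAbove
  have hx : ⨆ i, linearizedGap (f i) (g i) x y x ≤ 0 :=
    ciSup_le fun i ↦ linearizedGap_self_nonpos (hfc i) (hfd i) (g i) x
  linarith [le_add_inner_of_isMinOn_add_sq_norm hconv hz (mem_univ z) (mem_univ x)]

theorem decrease_of_isMinOn_proxModel
    (hfc : ∀ i, ConvexOn ℝ univ (f i)) (hfd : ∀ i, Differentiable ℝ (f i))
    (hL : ∀ i u, ‖gradient (f i) u - gradient (f i) y‖ ≤ L * ‖u - y‖)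
    (hgc : ∀ i, ConvexOn ℝ univ (g i)) (hz : IsMinOn (proxModel f g ℓ x y) univ z) (i : ι) :
    ℓ / 2 * (2 * ⟪z - y, y - x⟫ + ‖z - y‖ ^ 2) + (ℓ - L) / 2 * ‖z - y‖ ^ 2 ≤
      (f i x + g i x) - (f i z + g i z) := by
  have : Nonempty ι := ⟨i⟩
  have hsup := iSup_linearizedGap_le_of_isMinOn_proxModel hfc (fun i ↦ hfd i y) hgc hz
  have hi : linearizedGap (f i) (g i) x y z ≤ ⨆ i, linearizedGap (f i) (g i) x y z :=
    le_ciSup (f := fun i ↦ linearizedGap (f i) (g i) x y z) (finite_range _).bddAbove i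
  have hdescent := sub_le_linearizedGap_add (hfd i) (hL i) (g i) x z
  have hinner : ⟪z - y, x - z⟫ = -⟪z - y, y - x⟫ - ‖z - y‖ ^ 2 := by
    rw [← real_inner_self_eq_norm_sq, ← inner_neg_right, ← inner_sub_right]
    congr 1
    abel
  rw [hinner] at hsup
  linarith

end InnerProductSpace

theorem le_ciInf_sub_ciInf {ι : Type*} [Nonempty ι] {u v : ι → ℝ} {r : ℝ}
    (hv : BddBelow (range v)) (h : ∀ i, r ≤ u i - v i) : r ≤ (⨅ i, u i) - ⨅ i, v i := by
  rw [le_sub_iff_add_le]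
  refine le_ciInf fun i ↦ ?_
  linarith [h i, ciInf_le hv i]

theorem stmt_8_general {H ι : Type*} [NormedAddCommGroup H] [InnerProductSpace ℝ H]
    [CompleteSpace H] [Finite ι] [Nonempty ι] {f g : ι → H → ℝ} {L ℓ : ℝ} {x y z xNext : H}
    (hfc : ∀ i, ConvexOn ℝ univ (f i)) (hfd : ∀ i, Differentiable ℝ (f i))
    (hL : ∀ i u, ‖gradient (f i) u - gradient (f i) y‖ ≤ L * ‖u - y‖)
    (hgc : ∀ i, ConvexOn ℝ univ (g i)) (hz : IsMinOn (proxModel f g ℓ x y) univ z)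
    (haccept : 0 ≤ (⨆ i, ((f i x + g i x) - (f i z + g i z))) → xNext = z)
    (hreject : ¬ 0 ≤ (⨆ i, ((f i x + g i x) - (f i z + g i z))) → xNext = x) (w : H) :
    ℓ / 2 * (2 * ⟪z - y, y - x⟫ + ‖z - y‖ ^ 2) + (ℓ - L) / 2 * ‖z - y‖ ^ 2 ≤
      (⨅ i, ((f i x + g i x) - (f i w + g i w))) -
        ⨅ i, ((f i xNext + g i xNext) - (f i w + g i w)) := by
  have hdecrease := decrease_of_isMinOn_proxModel hfc hfd hL hgc hz
  by_cases hc : 0 ≤ ⨆ i, ((f i x + g i x) - (f i z + g i z))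
  · rw [haccept hc]
    refine le_ciInf_sub_ciInf (finite_range _).bddBelow fun i ↦ ?_
    rw [sub_sub_sub_cancel_right]
    exact hdecrease i
  · rw [hreject hc, sub_self]
    exact (le_ciSup_of_le (finite_range _).bddAbove (Classical.arbitrary ι) (hdecrease _)).trans
      (not_le.1 hc).le

theorem stmt_8
    (n m : ℕ) (hn : 1 ≤ n) (hm : 1 ≤ m)
    (f g F : Fin m → E n → ℝ)
    (L : Fin m → ℝ) (hL : ∀ i, 0 < L i)
    (hfc : ∀ i, ConvexOn ℝ Set.univ (f i))
    (hfd : ∀ i, ContDiff ℝ 1 (f i))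
    (hflip : ∀ i a b, ‖gradient (f i) a - gradient (f i) b‖ ≤ L i * ‖a - b‖)
    (hgc : ∀ i, ConvexOn ℝ Set.univ (g i))
    (hF : ∀ i w, F i w = f i w + g i w)
    (ℓ : ℝ) (hℓ : 0 < ℓ) (hℓL : ∀ i, L i ≤ ℓ)
    (d : E n → E n → E n)
    (hd : ∀ a b w,
      (⨆ i, (⟪gradient (f i) b, d a b - b⟫ + g i (d a b) + f i b - F i a)) +
          ℓ / 2 * ‖d a b - b‖ ^ 2 ≤
        (⨆ i, (⟪gradient (f i) b, w - b⟫ + g i w + f i b - F i a)) +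
          ℓ / 2 * ‖w - b‖ ^ 2)
    (x y z : ℕ → E n) (t : ℕ → ℝ)
    (hy1 : y 1 = x 0) (ht1 : t 1 = 1)
    (ht : ∀ k, 1 ≤ k → t (k + 1) = (1 + Real.sqrt (1 + 4 * t k ^ 2)) / 2)
    (hz : ∀ k, 1 ≤ k → z k = d (x (k - 1)) (y k))
    (hxpos : ∀ k, 1 ≤ k → 0 ≤ (⨆ i, (F i (x (k - 1)) - F i (z k))) → x k = z k)
    (hxneg : ∀ k, 1 ≤ k → ¬ 0 ≤ (⨆ i, (F i (x (k - 1)) - F i (z k))) → x k = x (k - 1))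
    (hy : ∀ k, 1 ≤ k →
      y (k + 1) = x k + (t k / t (k + 1)) • (z k - x k) +
        ((t k - 1) / t (k + 1)) • (x k - x (k - 1))) :
    ∀ (w : E n) (k : ℕ),
      (⨅ i, (F i (x k) - F i w)) - (⨅ i, (F i (x (k + 1)) - F i w)) ≥
        ℓ / 2 * (2 * ⟪z (k + 1) - y (k + 1), y (k + 1) - x k⟫ +
            ‖z (k + 1) - y (k + 1)‖ ^ 2) +
          (ℓ - ⨆ i, L i) / 2 * ‖z (k + 1) - y (k + 1)‖ ^ 2 := by
  intro w k
  have : Nonempty (Fin m) := ⟨⟨0, hm⟩⟩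
  obtain rfl : F = fun i u ↦ f i u + g i u := funext₂ hF
  have hLsup (i : Fin m) (u v : E n) :
      ‖gradient (f i) u - gradient (f i) v‖ ≤ (⨆ i, L i) * ‖u - v‖ :=
    (hflip i u v).trans (by gcongr; exact le_ciSup (finite_range L).bddAbove i)
  have hmin : IsMinOn (proxModel f g ℓ (x k) (y (k + 1))) univ (z (k + 1)) := fun u _ ↦ by
    rw [hz (k + 1) k.succ_pos]
    exact hd (x k) (y (k + 1)) u
  exact stmt_8_general hfc (fun i ↦ (hfd i).differentiable one_ne_zero) (fun i u ↦ hLsup i u _) hgc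
    hmin (hxpos (k + 1) k.succ_pos) (hxneg (k + 1) k.succ_pos) w
end

section
/- Let {x^k}, {y^k}, {z^k} be generated by the multiobjective MFISTA algorithm. Then for all i = 1,…,m and all k ≥ 0: F_i(x^k) − F_i(x^{k+1}) ≥ (ℓ/2)( ‖z^{k+1} − x^k‖² − ‖y^{k+1} − x^k‖² ). -/
open scoped RealInnerProductSpace

/-!
Fix `x = x^k`, `y = y^{k+1}`, `z = z^{k+1}`. The maximum `h` in the subproblem is convex, so
`h + (ℓ/2)‖· - y‖²` is strongly convex and its value at `x` exceeds its minimum, attained at `z`,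
by at least `(ℓ/2)‖x - z‖²`. The descent lemma, at each index `i`, bounds the subproblem at `z`
below by `F_i(z) - F_i(x)`, and the gradient inequality for each `f_i` gives `h(x) ≤ 0`. Together,
`F_i(z) - F_i(x) ≤ (ℓ/2)(‖x - y‖² - ‖x - z‖²)`. If the step to `z` is rejected then every `F_i`
increases from `x` to `z`, so the same bound holds a fortiori for the trivial step.
-/

open scoped NNReal Gradient Topology

section Calculus

variable {V W : Type*} [NormedAddCommGroup V] [NormedSpace ℝ V] [NormedAddCommGroup W]
  [NormedSpace ℝ W] {s : Set V} {x y : V}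

theorem norm_sub_sub_le_of_lipschitzOnWith_hasFDerivWithinAt {f : V → W} {f' : V → V →L[ℝ] W}
    {K : ℝ≥0} (hs : Convex ℝ s) (hf : ∀ a ∈ s, HasFDerivWithinAt f (f' a) s a)
    (hf' : LipschitzOnWith K f' s) (hx : x ∈ s) (hy : y ∈ s) :
    ‖f y - f x - f' x (y - x)‖ ≤ K / 2 * ‖y - x‖ ^ 2 := by
  let p : ℝ → V := AffineMap.lineMap x y
  have hp : Set.MapsTo p (Set.Icc 0 1) s := fun r hr ↦ hs.lineMap_mem hx hy hr
  let R : ℝ → W := fun r ↦ f (p r) - f x - r • f' x (y - x)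
  have hR : ∀ r ∈ Set.Icc (0 : ℝ) 1,
      HasDerivWithinAt R (f' (p r) (y - x) - f' x (y - x)) (Set.Icc 0 1) r := fun r hr ↦
    ((((hf _ (hp hr)).comp_hasDerivWithinAt r AffineMap.hasDerivWithinAt_lineMap hp).sub_const
      (f x)).sub ((hasDerivWithinAt_id r _).smul_const (f' x (y - x)))).congr_deriv
        (by rw [one_smul])
  have hB (r : ℝ) : HasDerivAt (fun r ↦ K / 2 * ‖y - x‖ ^ 2 * r ^ 2) (K * r * ‖y - x‖ ^ 2) r :=
    ((hasDerivAt_pow 2 r).const_mul _).congr_deriv (by norm_num; ring)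
  have hbound : ∀ r ∈ Set.Ico (0 : ℝ) 1,
      ‖f' (p r) (y - x) - f' x (y - x)‖ ≤ K * r * ‖y - x‖ ^ 2 := fun r hr ↦
    calc ‖f' (p r) (y - x) - f' x (y - x)‖
        ≤ ‖f' (p r) - f' x‖ * ‖y - x‖ := (f' (p r) - f' x).le_opNorm (y - x)
      _ ≤ K * ‖p r - x‖ * ‖y - x‖ := by
        gcongr
        exact hf'.norm_sub_le (hp (Set.Ico_subset_Icc_self hr)) hx
      _ = K * r * ‖y - x‖ ^ 2 := by
        simp only [p, AffineMap.lineMap_apply_module', add_sub_cancel_right, norm_smul,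
          Real.norm_of_nonneg hr.1]
        ring
  simpa [R, p] using image_norm_le_of_norm_deriv_right_le_deriv_boundary
    (fun r hr ↦ (hR r hr).continuousWithinAt)
    (fun r hr ↦ (hR r (Set.Ico_subset_Icc_self hr)).mono_of_mem_nhdsWithin
      (Icc_mem_nhdsGE_of_mem hr))
    (by simp [R, p]) hB hbound (Set.right_mem_Icc.2 zero_le_one)

theorem add_hasFDerivWithinAt_le_of_convexOn {f : V → ℝ} {f' : V →L[ℝ] ℝ} (hf : ConvexOn ℝ s f)
    (hx : x ∈ s) (hf' : HasFDerivWithinAt f f' s x) (hy : y ∈ s) :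
    f x + f' (y - x) ≤ f y := by
  let p : ℝ →ᵃ[ℝ] V := AffineMap.lineMap x y
  have hderiv : HasDerivWithinAt (f ∘ p) (f' (y - x)) (p ⁻¹' s) 0 :=
    HasFDerivWithinAt.comp_hasDerivWithinAt_of_eq 0 hf' AffineMap.hasDerivWithinAt_lineMap
      (Set.mapsTo_preimage p s) (AffineMap.lineMap_apply_zero x y).symm
  have hslope := (hf.comp_affineMap p).le_slope_of_hasDerivWithinAt
    (by simpa [p] using hx) (by simpa [p] using hy) one_pos hderiv
  have : f' (y - x) ≤ f y - f x := by simpa [slope_def_field, p] using hslope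
  linarith

end Calculus

section Convexity

variable {V : Type*} {s : Set V}

theorem convexOn_ciSup_s12 {ι : Type*} [Nonempty ι] [AddCommGroup V] [Module ℝ V] {h : ι → V → ℝ}
    (hh : ∀ i, ConvexOn ℝ s (h i)) (hbdd : ∀ a ∈ s, BddAbove (Set.range fun i ↦ h i a)) :
    ConvexOn ℝ s fun a ↦ ⨆ i, h i a := by
  refine ⟨(hh (Classical.arbitrary ι)).1, fun a ha b hb p q hp hq hpq ↦ ciSup_le fun i ↦ ?_⟩
  calc h i (p • a + q • b) ≤ p • h i a + q • h i b := (hh i).2 ha hb hp hq hpq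
    _ ≤ p • (⨆ j, h j a) + q • ⨆ j, h j b := by
      gcongr
      · exact le_ciSup (hbdd a ha) i
      · exact le_ciSup (hbdd b hb) i

theorem add_le_of_uniformConvexOn_of_isMinOn [NormedAddCommGroup V] [NormedSpace ℝ V]
    {φ : V → ℝ} {ψ : ℝ → ℝ} {z w : V} (hφ : UniformConvexOn s ψ φ) (hmin : IsMinOn φ s z)
    (hz : z ∈ s) (hw : w ∈ s) : φ z + ψ ‖w - z‖ ≤ φ w := by
  have hsegment : ∀ r ∈ Set.Ioo (0 : ℝ) 1, φ z + (1 - r) * ψ ‖w - z‖ ≤ φ w := by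
    rintro r ⟨hr₀, hr₁⟩
    have hr : r + (1 - r) = 1 := by ring
    have hle := isMinOn_iff.1 hmin _ (hφ.1 hw hz hr₀.le (sub_nonneg.2 hr₁.le) hr)
    have hconv := hφ.2 hw hz hr₀.le (sub_nonneg.2 hr₁.le) hr
    simp only [smul_eq_mul] at hconv
    refine le_of_mul_le_mul_left ?_ hr₀
    linarith
  have hlim : Filter.Tendsto (fun r : ℝ ↦ φ z + (1 - r) * ψ ‖w - z‖) (𝓝[>] 0)
      (𝓝 (φ z + ψ ‖w - z‖)) :=
    tendsto_nhdsWithin_of_tendsto_nhds (Continuous.tendsto' (by fun_prop) _ _ (by simp))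
  exact le_of_tendsto hlim (Filter.eventually_of_mem (Ioo_mem_nhdsGT one_pos) hsegment)

theorem strongConvexOn_add_sq_norm_sub [NormedAddCommGroup V] [InnerProductSpace ℝ V]
    {h : V → ℝ} (hh : ConvexOn ℝ s h) (c : ℝ) (y : V) :
    StrongConvexOn s c fun a ↦ h a + c / 2 * ‖a - y‖ ^ 2 := by
  rw [strongConvexOn_iff_convex]
  have hlinear : ConvexOn ℝ s fun a ↦ -c * ⟪y, a⟫ :=
    (-c • innerSL ℝ y).toLinearMap.convexOn hh.1
  refine ((hh.add hlinear).add_const (c / 2 * ‖y‖ ^ 2)).congr fun a _ ↦ ?_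
  simp only [Pi.add_apply, norm_sub_sq_real, real_inner_comm y a]
  ring

end Convexity

section Hilbert

variable {H : Type*} [NormedAddCommGroup H] [InnerProductSpace ℝ H] [CompleteSpace H]

theorem le_add_inner_gradient_add_sq_of_lipschitzWith {f : H → ℝ} {K : ℝ≥0}
    (hf : Differentiable ℝ f) (hlip : LipschitzWith K (∇ f)) (x y : H) :
    f y ≤ f x + ⟪∇ f x, y - x⟫ + K / 2 * ‖y - x‖ ^ 2 := by
  have hlip' : LipschitzWith K (fderiv ℝ f) := by
    simpa only [toDual_comp_gradient, one_mul] using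
      (InnerProductSpace.toDual ℝ H).lipschitz.comp hlip
  have hremainder := norm_sub_sub_le_of_lipschitzOnWith_hasFDerivWithinAt convex_univ
    (fun a _ ↦ (hf a).hasFDerivAt.hasFDerivWithinAt) hlip'.lipschitzOnWith
    (Set.mem_univ x) (Set.mem_univ y)
  rw [inner_gradient_left]
  linarith [le_of_abs_le hremainder]

theorem add_inner_gradient_le_of_convexOn {f : H → ℝ} {s : Set H} {x y : H}
    (hf : ConvexOn ℝ s f) (hx : x ∈ s) (hfx : DifferentiableAt ℝ f x) (hy : y ∈ s) :
    f x + ⟪∇ f x, y - x⟫ ≤ f y := by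
  rw [inner_gradient_left]
  exact add_hasFDerivWithinAt_le_of_convexOn hf hx hfx.hasFDerivAt.hasFDerivWithinAt hy

variable {ι : Type*} {f g : ι → H → ℝ} {ℓ : ℝ≥0} {x y z : H}

/-- The objective `φ_{x,y,ℓ}` of the MFISTA subproblem without its quadratic term: the largest
increase from `F_i x` to the model of `F_i = f_i + g_i` in which `f_i` is linearized at `y`. -/
noncomputable def maxLinearizedIncrease (f g : ι → H → ℝ) (x y z : H) : ℝ :=
  ⨆ i, (⟪∇ (f i) y, z - y⟫ + g i z + f i y - (f + g) i x)

theorem convexOn_maxLinearizedIncrease [Finite ι] [Nonempty ι] {s : Set H}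
    (hg : ∀ i, ConvexOn ℝ s (g i)) (x y : H) :
    ConvexOn ℝ s (maxLinearizedIncrease f g x y) := by
  refine convexOn_ciSup_s12 (fun i ↦ ?_) fun z _ ↦ (Set.finite_range _).bddAbove
  have hlinear : ConvexOn ℝ s fun z ↦ ⟪∇ (f i) y, z⟫ :=
    (innerSL ℝ (∇ (f i) y)).toLinearMap.convexOn (hg i).1
  refine (((hg i).add hlinear).add_const
    (f i y - ⟪∇ (f i) y, y⟫ - (f + g) i x)).congr fun z _ ↦ ?_
  simp only [Pi.add_apply, inner_sub_right]
  ring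

theorem maxLinearizedIncrease_self_nonpos (hf : ∀ i, ConvexOn ℝ Set.univ (f i))
    (hfy : ∀ i, DifferentiableAt ℝ (f i) y) : maxLinearizedIncrease f g x y x ≤ 0 := by
  refine Real.iSup_le (fun i ↦ ?_) le_rfl
  have := add_inner_gradient_le_of_convexOn (hf i) (Set.mem_univ y) (hfy i) (Set.mem_univ x)
  simp only [Pi.add_apply]
  linarith

theorem sub_le_maxLinearizedIncrease_add_sq [Finite ι] (hf : ∀ i, Differentiable ℝ (f i))
    (hlip : ∀ i, LipschitzWith ℓ (∇ (f i))) (i : ι) :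
    (f + g) i z - (f + g) i x ≤ maxLinearizedIncrease f g x y z + ℓ / 2 * ‖z - y‖ ^ 2 := by
  have hmax : ⟪∇ (f i) y, z - y⟫ + g i z + f i y - (f + g) i x ≤
      maxLinearizedIncrease f g x y z :=
    le_ciSup (f := fun i ↦ ⟪∇ (f i) y, z - y⟫ + g i z + f i y - (f + g) i x)
      (Set.finite_range _).bddAbove i
  have hdescent := le_add_inner_gradient_add_sq_of_lipschitzWith (hf i) (hlip i) y z
  simp only [Pi.add_apply] at hmax ⊢
  linarith

theorem sub_le_of_isMinOn_maxLinearizedIncrease_add_sq [Finite ι]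
    (hfc : ∀ i, ConvexOn ℝ Set.univ (f i)) (hfd : ∀ i, Differentiable ℝ (f i))
    (hlip : ∀ i, LipschitzWith ℓ (∇ (f i))) (hgc : ∀ i, ConvexOn ℝ Set.univ (g i))
    (hz : IsMinOn (fun w ↦ maxLinearizedIncrease f g x y w + ℓ / 2 * ‖w - y‖ ^ 2) Set.univ z)
    (i : ι) : (f + g) i z - (f + g) i x ≤ ℓ / 2 * (‖y - x‖ ^ 2 - ‖z - x‖ ^ 2) := by
  have : Nonempty ι := ⟨i⟩
  have hgrowth :
      maxLinearizedIncrease f g x y z + ℓ / 2 * ‖z - y‖ ^ 2 + ℓ / 2 * ‖x - z‖ ^ 2 ≤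
        maxLinearizedIncrease f g x y x + ℓ / 2 * ‖x - y‖ ^ 2 :=
    add_le_of_uniformConvexOn_of_isMinOn
      (strongConvexOn_add_sq_norm_sub (convexOn_maxLinearizedIncrease hgc x y) ℓ y) hz
      (Set.mem_univ z) (Set.mem_univ x)
  rw [norm_sub_rev x z, norm_sub_rev x y] at hgrowth
  have hself := maxLinearizedIncrease_self_nonpos (g := g) (x := x) hfc fun i ↦ hfd i y
  have hincrease := sub_le_maxLinearizedIncrease_add_sq (g := g) (x := x) (y := y) (z := z)
    hfd hlip i
  linarith

end Hilbert

theorem stmt_12_general {H ι : Type*} [NormedAddCommGroup H] [InnerProductSpace ℝ H]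
    [CompleteSpace H] [Finite ι] {f g : ι → H → ℝ} {ℓ : ℝ≥0}
    (hfc : ∀ i, ConvexOn ℝ Set.univ (f i)) (hfd : ∀ i, Differentiable ℝ (f i))
    (hlip : ∀ i, LipschitzWith ℓ (∇ (f i))) (hgc : ∀ i, ConvexOn ℝ Set.univ (g i))
    {x y z : ℕ → H}
    (hz : ∀ k, IsMinOn (fun w ↦ maxLinearizedIncrease f g (x k) (y (k + 1)) w +
      ℓ / 2 * ‖w - y (k + 1)‖ ^ 2) Set.univ (z (k + 1)))
    (hxpos : ∀ k, 0 ≤ (⨆ i, ((f + g) i (x k) - (f + g) i (z (k + 1)))) → x (k + 1) = z (k + 1))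
    (hxneg : ∀ k, ¬ 0 ≤ (⨆ i, ((f + g) i (x k) - (f + g) i (z (k + 1)))) → x (k + 1) = x k)
    (i : ι) (k : ℕ) :
    (f + g) i (x k) - (f + g) i (x (k + 1)) ≥
      ℓ / 2 * (‖z (k + 1) - x k‖ ^ 2 - ‖y (k + 1) - x k‖ ^ 2) := by
  have hstep := sub_le_of_isMinOn_maxLinearizedIncrease_add_sq hfc hfd hlip hgc (hz k) i
  by_cases haccept : 0 ≤ ⨆ i, ((f + g) i (x k) - (f + g) i (z (k + 1)))
  · rw [hxpos k haccept]
    linarith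
  · have hincrease : (f + g) i (x k) - (f + g) i (z (k + 1)) < 0 :=
      (le_ciSup (f := fun i ↦ (f + g) i (x k) - (f + g) i (z (k + 1)))
        (Set.finite_range _).bddAbove i).trans_lt (not_le.1 haccept)
    rw [hxneg k haccept]
    linarith

theorem stmt_12
    (n m : ℕ) (hn : 1 ≤ n) (hm : 1 ≤ m)
    (f g F : Fin m → E n → ℝ)
    (L : Fin m → ℝ) (hL : ∀ i, 0 < L i)
    (hfc : ∀ i, ConvexOn ℝ Set.univ (f i))
    (hfd : ∀ i, ContDiff ℝ 1 (f i))
    (hflip : ∀ i a b, ‖gradient (f i) a - gradient (f i) b‖ ≤ L i * ‖a - b‖)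
    (hgc : ∀ i, ConvexOn ℝ Set.univ (g i))
    (hF : ∀ i w, F i w = f i w + g i w)
    (ℓ : ℝ) (hℓ : 0 < ℓ) (hℓL : ∀ i, L i ≤ ℓ)
    (d : E n → E n → E n)
    (hd : ∀ a b w,
      (⨆ i, (⟪gradient (f i) b, d a b - b⟫ + g i (d a b) + f i b - F i a)) +
          ℓ / 2 * ‖d a b - b‖ ^ 2 ≤
        (⨆ i, (⟪gradient (f i) b, w - b⟫ + g i w + f i b - F i a)) +
          ℓ / 2 * ‖w - b‖ ^ 2)
    (x y z : ℕ → E n) (t : ℕ → ℝ)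
    (hy1 : y 1 = x 0) (ht1 : t 1 = 1)
    (ht : ∀ k, 1 ≤ k → t (k + 1) = (1 + Real.sqrt (1 + 4 * t k ^ 2)) / 2)
    (hz : ∀ k, 1 ≤ k → z k = d (x (k - 1)) (y k))
    (hxpos : ∀ k, 1 ≤ k → 0 ≤ (⨆ i, (F i (x (k - 1)) - F i (z k))) → x k = z k)
    (hxneg : ∀ k, 1 ≤ k → ¬ 0 ≤ (⨆ i, (F i (x (k - 1)) - F i (z k))) → x k = x (k - 1))
    (hy : ∀ k, 1 ≤ k →
      y (k + 1) = x k + (t k / t (k + 1)) • (z k - x k) +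
        ((t k - 1) / t (k + 1)) • (x k - x (k - 1))) :
    ∀ (i : Fin m) (k : ℕ),
      F i (x k) - F i (x (k + 1)) ≥
        ℓ / 2 * (‖z (k + 1) - x k‖ ^ 2 - ‖y (k + 1) - x k‖ ^ 2) := by
  lift ℓ to ℝ≥0 using hℓ.le
  obtain rfl : F = f + g := funext₂ hF
  have hlip (i : Fin m) : LipschitzWith ℓ (∇ (f i)) := .of_dist_le_mul fun a b ↦ by
    simpa only [dist_eq_norm] using
      (hflip i a b).trans (mul_le_mul_of_nonneg_right (hℓL i) (norm_nonneg _))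
  have hmin (k : ℕ) : IsMinOn (fun w ↦ maxLinearizedIncrease f g (x k) (y (k + 1)) w +
      ℓ / 2 * ‖w - y (k + 1)‖ ^ 2) Set.univ (z (k + 1)) := by
    rw [hz (k + 1) k.succ_pos]
    exact isMinOn_univ_iff.2 (hd (x k) (y (k + 1)))
  exact stmt_12_general hfc (fun i ↦ (hfd i).differentiable one_ne_zero) hlip hgc hmin
    (fun k ↦ hxpos (k + 1) k.succ_pos) fun k ↦ hxneg (k + 1) k.succ_pos
end
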